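/- arXiv:2308.07460 — 5 statements merged into one kernel-verified Lean document; each statement's English description precedes it below -/
import Mathlib

section
/- Let N ≥ 1 be an integer, let 0 < s < 1 < p be real numbers, and let R > 0. Then there exists a constant c > 0 (depending only on N, p, s and R) such that for every continuously differentiable function u : ℝ^N → ℝ whose support is contained in the closed ball of radius R centered at the origin, one has ∬_{ℝ^N×ℝ^N} |u(x)−u(y)|^p / ‖x−y‖^{N+ps} dx dy ≤ c ∫_{ℝ^N} ‖∇u(x)‖^p dx. -/
open MeasureTheory Metric

/-!
Translating a `C¹` function by `h` changes it in `L^p` by at most `‖h‖ ‖∇u‖_p`: integrate the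
gradient along the segment from `x` to `x + h` and apply Jensen's inequality. If a translation by
`v` moves the support of `u` off itself, then `u` is, on its support, its own increment along `v`,
so this gives a Poincaré inequality `‖u‖_p ≤ ‖v‖ ‖∇u‖_p`, and every increment of `u` is at most
`2 ‖v‖ ‖∇u‖_p` in `L^p`. In the variables `h = x - y` and `y`, the Gagliardo energy is therefore at
most a constant times `‖∇u‖_p^p ∫ min(‖h‖^p, 1) ‖h‖^(-N - ps) dh`. The weight converges at the
origin because `s < 1` and at infinity because `s > 0`.
-/

open Set Module Bornology
open scoped ENNReal

lemma lintegral_rpow_le_lintegral_rpow {α : Type*} [MeasurableSpace α] {μ : Measure α}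
    [IsProbabilityMeasure μ] {f : α → ℝ≥0∞} {p : ℝ} (hf : AEMeasurable f μ) (hp : 1 ≤ p) :
    (∫⁻ a, f a ∂μ) ^ p ≤ ∫⁻ a, f a ^ p ∂μ := by
  have hnorm : ∫⁻ a, f a ∂μ ≤ (∫⁻ a, f a ^ p ∂μ) ^ p⁻¹ := by
    simpa [eLpNorm'] using
      eLpNorm'_le_eLpNorm'_of_exponent_le zero_lt_one hp μ hf.aestronglyMeasurable
  simpa using (ENNReal.le_rpow_inv_iff (zero_lt_one.trans_le hp)).1 hnorm

lemma lintegral_enorm_add_sub_rpow_le_lintegral_enorm_rpow {G F : Type*} [AddGroup G]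
    [MeasurableSpace G] [MeasurableAdd G] {μ : Measure G} [μ.IsAddRightInvariant]
    [SeminormedAddCommGroup F] {u : G → F} {p : ℝ} (hp : 1 ≤ p)
    (hu : AEMeasurable (fun x => ‖u x‖ₑ) μ) (h : G) :
    ∫⁻ x, ‖u (x + h) - u x‖ₑ ^ p ∂μ ≤ 2 ^ p * ∫⁻ x, ‖u x‖ₑ ^ p ∂μ := by
  calc ∫⁻ x, ‖u (x + h) - u x‖ₑ ^ p ∂μ
      ≤ ∫⁻ x, 2 ^ (p - 1) * (‖u (x + h)‖ₑ ^ p + ‖u x‖ₑ ^ p) ∂μ :=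
        lintegral_mono fun x =>
          (ENNReal.rpow_le_rpow enorm_sub_le (zero_le_one.trans hp)).trans <|
            ENNReal.rpow_add_le_mul_rpow_add_rpow _ _ hp
    _ = 2 ^ (p - 1) * (2 * ∫⁻ x, ‖u x‖ₑ ^ p ∂μ) := by
        rw [lintegral_const_mul' _ _ (by finiteness),
          lintegral_add_right' _ (hu.pow_const p),
          lintegral_add_right_eq_self (fun y => ‖u y‖ₑ ^ p), two_mul]
    _ = 2 ^ p * ∫⁻ x, ‖u x‖ₑ ^ p ∂μ := by
        rw [← mul_assoc, ENNReal.rpow_sub _ _ two_ne_zero ENNReal.ofNat_ne_top, ENNReal.rpow_one,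
          ENNReal.div_mul_cancel two_ne_zero ENNReal.ofNat_ne_top]

section Increments

variable {E F : Type*} [NormedAddCommGroup E] [NormedSpace ℝ E]
  [NormedAddCommGroup F] [NormedSpace ℝ F] {u : E → F} {p : ℝ}

lemma enorm_add_sub_le_lintegral_enorm_fderiv (hu : ContDiff ℝ 1 u) (x h : E) :
    ‖u (x + h) - u x‖ₑ ≤ ∫⁻ t in Icc (0 : ℝ) 1, ‖h‖ₑ * ‖fderiv ℝ u (x + t • h)‖ₑ := by
  have hderiv (t : ℝ) :
      HasDerivAt (fun t : ℝ => u (x + t • h)) (fderiv ℝ u (x + t • h) h) t := by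
    have hline : HasDerivAt (fun t : ℝ => x + t • h) h t := by
      simpa using ((hasDerivAt_id t).smul_const h).const_add x
    exact (hu.differentiable one_ne_zero _).hasFDerivAt.comp_hasDerivAt t hline
  have hftc : ‖u (x + (1 : ℝ) • h) - u (x + (0 : ℝ) • h)‖ₑ ≤
      ∫⁻ t in Icc (0 : ℝ) 1, ‖deriv (fun t : ℝ => u (x + t • h)) t‖ₑ :=
    enorm_sub_le_lintegral_deriv_of_contDiffOn_Icc (f := fun t : ℝ => u (x + t • h))
      (by fun_prop) zero_le_one
  simp only [one_smul, zero_smul, add_zero] at hftc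
  refine hftc.trans (lintegral_mono fun t => ?_)
  rw [(hderiv t).deriv, mul_comm]
  exact ContinuousLinearMap.le_opENorm _ _

variable [MeasurableSpace E] [BorelSpace E] {μ : Measure E} [μ.IsAddRightInvariant]

lemma lintegral_enorm_add_sub_rpow_le [SFinite μ] (hp : 1 ≤ p) (hu : ContDiff ℝ 1 u) (h : E) :
    ∫⁻ x, ‖u (x + h) - u x‖ₑ ^ p ∂μ ≤ ‖h‖ₑ ^ p * ∫⁻ x, ‖fderiv ℝ u x‖ₑ ^ p ∂μ := by
  have hp₀ : 0 ≤ p := zero_le_one.trans hp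
  have hjoint : Continuous fun q : E × ℝ => fderiv ℝ u (q.1 + q.2 • h) :=
    (hu.continuous_fderiv one_ne_zero).comp (by fun_prop)
  have : IsProbabilityMeasure (volume.restrict (Icc (0 : ℝ) 1)) := ⟨by simp⟩
  calc ∫⁻ x, ‖u (x + h) - u x‖ₑ ^ p ∂μ
      ≤ ∫⁻ x, (∫⁻ t in Icc (0 : ℝ) 1, (‖h‖ₑ * ‖fderiv ℝ u (x + t • h)‖ₑ) ^ p) ∂μ :=
        lintegral_mono fun x =>
          (ENNReal.rpow_le_rpow (enorm_add_sub_le_lintegral_enorm_fderiv hu x h) hp₀).trans <|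
            lintegral_rpow_le_lintegral_rpow (by fun_prop) hp
    _ = ∫⁻ t in Icc (0 : ℝ) 1, (∫⁻ x, (‖h‖ₑ * ‖fderiv ℝ u (x + t • h)‖ₑ) ^ p ∂μ) :=
        lintegral_lintegral_swap
          ((hjoint.enorm.measurable.const_mul _).pow_const p).aemeasurable
    _ = ∫⁻ _ in Icc (0 : ℝ) 1, (‖h‖ₑ ^ p * ∫⁻ x, ‖fderiv ℝ u x‖ₑ ^ p ∂μ) := by
        refine lintegral_congr fun t => ?_
        simp_rw [ENNReal.mul_rpow_of_nonneg _ _ hp₀]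
        rw [lintegral_const_mul' _ _ (by finiteness),
          lintegral_add_right_eq_self (fun y => ‖fderiv ℝ u y‖ₑ ^ p)]
    _ = ‖h‖ₑ ^ p * ∫⁻ x, ‖fderiv ℝ u x‖ₑ ^ p ∂μ := by simp

lemma lintegral_enorm_rpow_le_of_translate_eq_zero [SFinite μ] (hp : 1 ≤ p) (hu : ContDiff ℝ 1 u)
    {v : E} (hv : ∀ x, u x ≠ 0 → u (x + v) = 0) :
    ∫⁻ x, ‖u x‖ₑ ^ p ∂μ ≤ ‖v‖ₑ ^ p * ∫⁻ x, ‖fderiv ℝ u x‖ₑ ^ p ∂μ := by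
  refine (lintegral_mono fun x => ?_).trans (lintegral_enorm_add_sub_rpow_le hp hu v)
  by_cases hx : u x = 0
  · simp [hx, zero_lt_one.trans_le hp]
  · simp [hv x hx]

lemma lintegral_enorm_add_sub_rpow_le_min [SFinite μ] (hp : 1 ≤ p) (hu : ContDiff ℝ 1 u)
    {v : E} (hv : ∀ x, u x ≠ 0 → u (x + v) = 0) (h : E) :
    ∫⁻ x, ‖u (x + h) - u x‖ₑ ^ p ∂μ ≤
      (1 + 2 ^ p * ‖v‖ₑ ^ p) * (∫⁻ x, ‖fderiv ℝ u x‖ₑ ^ p ∂μ) * min (‖h‖ₑ ^ p) 1 := by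
  set G := ∫⁻ x, ‖fderiv ℝ u x‖ₑ ^ p ∂μ
  rcases min_choice (‖h‖ₑ ^ p) 1 with hmin | hmin <;> rw [hmin]
  · calc ∫⁻ x, ‖u (x + h) - u x‖ₑ ^ p ∂μ
        ≤ 1 * G * ‖h‖ₑ ^ p := by
          simpa [mul_comm] using lintegral_enorm_add_sub_rpow_le hp hu h
      _ ≤ (1 + 2 ^ p * ‖v‖ₑ ^ p) * G * ‖h‖ₑ ^ p := by gcongr; exact le_self_add
  · calc ∫⁻ x, ‖u (x + h) - u x‖ₑ ^ p ∂μ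
        ≤ 2 ^ p * ∫⁻ x, ‖u x‖ₑ ^ p ∂μ :=
          lintegral_enorm_add_sub_rpow_le_lintegral_enorm_rpow hp
            hu.continuous.enorm.measurable.aemeasurable h
      _ ≤ 2 ^ p * (‖v‖ₑ ^ p * G) := by
          gcongr
          exact lintegral_enorm_rpow_le_of_translate_eq_zero hp hu hv
      _ ≤ (1 + 2 ^ p * ‖v‖ₑ ^ p) * G * 1 := by
          rw [mul_one, ← mul_assoc]
          gcongr
          exact le_add_self

lemma lintegral_prod_enorm_sub_rpow_mul_le [SecondCountableTopology E] [SFinite μ] (hp : 1 ≤ p)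
    (hu : ContDiff ℝ 1 u) {v : E} (hv : ∀ x, u x ≠ 0 → u (x + v) = 0)
    {k : E → ℝ≥0∞} (hk : Measurable k) :
    ∫⁻ z, ‖u z.1 - u z.2‖ₑ ^ p * k (z.1 - z.2) ∂(μ.prod μ) ≤
      (1 + 2 ^ p * ‖v‖ₑ ^ p) * (∫⁻ h, min (‖h‖ₑ ^ p) 1 * k h ∂μ) *
        ∫⁻ x, ‖fderiv ℝ u x‖ₑ ^ p ∂μ := by
  have hcont : Continuous u := hu.continuous
  have hdiff : Measurable fun z : E × E => ‖u z.1 - u z.2‖ₑ ^ p :=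
    (by fun_prop : Continuous fun z : E × E => u z.1 - u z.2).enorm.measurable.pow_const p
  set G := ∫⁻ x, ‖fderiv ℝ u x‖ₑ ^ p ∂μ
  calc ∫⁻ z, ‖u z.1 - u z.2‖ₑ ^ p * k (z.1 - z.2) ∂(μ.prod μ)
      = ∫⁻ z, ‖u (z.1 + z.2) - u z.2‖ₑ ^ p * k z.1 ∂(μ.prod μ) := by
        rw [← (measurePreserving_add_prod μ μ).lintegral_comp (by fun_prop)]
        simp
    _ = ∫⁻ h, (∫⁻ x, ‖u (x + h) - u x‖ₑ ^ p ∂μ) * k h ∂μ := by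
        rw [lintegral_prod _ (by fun_prop)]
        refine lintegral_congr fun h => ?_
        simp only [add_comm h]
        exact lintegral_mul_const _ (hdiff.comp (by fun_prop : Measurable fun x => (x + h, x)))
    _ ≤ ∫⁻ h, (1 + 2 ^ p * ‖v‖ₑ ^ p) * G * (min (‖h‖ₑ ^ p) 1 * k h) ∂μ := by
        refine lintegral_mono fun h => ?_
        rw [← mul_assoc]
        gcongr
        exact lintegral_enorm_add_sub_rpow_le_min hp hu hv h
    _ = (1 + 2 ^ p * ‖v‖ₑ ^ p) * (∫⁻ h, min (‖h‖ₑ ^ p) 1 * k h ∂μ) * G := by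
        rw [lintegral_const_mul _ (by fun_prop), mul_right_comm]

end Increments

lemma integrableOn_Ioi_min_rpow_one_mul_rpow {a b : ℝ} (hb : 0 < b) (hab : b < a) :
    IntegrableOn (fun r : ℝ => min (r ^ a) 1 * r ^ (-b - 1)) (Ioi 0) := by
  have ha : 0 ≤ a := (hb.trans hab).le
  rw [← Ioc_union_Ioi_eq_Ioi zero_le_one]
  refine IntegrableOn.union ?_ ?_
  · have hint : IntegrableOn (fun r : ℝ => r ^ (a - b - 1)) (Ioc 0 1) :=
      (intervalIntegrable_iff_integrableOn_Ioc_of_le zero_le_one).1 <|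
        intervalIntegral.intervalIntegrable_rpow' (by linarith)
    refine hint.congr_fun (fun r hr => ?_) measurableSet_Ioc
    dsimp only
    rw [min_eq_left (Real.rpow_le_one hr.1.le hr.2 ha), ← Real.rpow_add hr.1]
    ring_nf
  · have hint : IntegrableOn (fun r : ℝ => r ^ (-b - 1)) (Ioi 1) :=
      integrableOn_Ioi_rpow_of_lt (by linarith) zero_lt_one
    refine hint.congr_fun (fun r hr => ?_) measurableSet_Ioi
    dsimp only
    rw [min_eq_right (Real.one_le_rpow (mem_Ioi.1 hr).le ha), one_mul]

section FiniteDimensional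

variable {E : Type*} [NormedAddCommGroup E] [NormedSpace ℝ E]

lemma exists_forall_add_notMem_of_isBounded [Nontrivial E] {S : Set E} (hS : IsBounded S) :
    ∃ v : E, ∀ x ∈ S, x + v ∉ S := by
  obtain ⟨C, hC⟩ := isBounded_iff.1 hS
  obtain ⟨v, hv⟩ := NormedSpace.exists_lt_norm ℝ E C
  refine ⟨v, fun x hx hxv => hv.not_ge ?_⟩
  simpa using hC hxv hx

variable [MeasurableSpace E] [BorelSpace E]

lemma lintegral_min_enorm_rpow_one_mul_ofReal_lt_top [Nontrivial E] [FiniteDimensional ℝ E]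
    (μ : Measure E) [μ.IsAddHaarMeasure] {a b : ℝ} (hb : 0 < b) (hab : b < a) :
    ∫⁻ x, min (‖x‖ₑ ^ a) 1 * ENNReal.ofReal (‖x‖ ^ (finrank ℝ E + b))⁻¹ ∂μ < ∞ := by
  have hradial : Integrable (fun x => min (‖x‖ ^ a) 1 * (‖x‖ ^ (finrank ℝ E + b))⁻¹) μ := by
    refine (integrable_fun_norm_addHaar μ
      (f := fun r => min (r ^ a) 1 * (r ^ (finrank ℝ E + b))⁻¹)).2 ?_
    refine (integrableOn_Ioi_min_rpow_one_mul_rpow hb hab).congr_fun (fun r hr => ?_)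
      measurableSet_Ioi
    have hexp : r ^ (-b - 1) = r ^ (finrank ℝ E - 1) * (r ^ (finrank ℝ E + b))⁻¹ := by
      rw [← Real.rpow_natCast, Nat.cast_pred finrank_pos, ← Real.rpow_neg (le_of_lt hr),
        ← Real.rpow_add hr]
      ring_nf
    simp only [hexp, smul_eq_mul]
    ring
  refine (lintegral_congr fun x => ?_).trans_lt hradial.lintegral_lt_top
  rw [ENNReal.ofReal_mul (by positivity), ENNReal.ofReal_mono.map_min, ENNReal.ofReal_one,
    ← ENNReal.ofReal_rpow_of_nonneg (norm_nonneg x) (hb.trans hab).le, ofReal_norm]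

variable {F : Type*} [NormedAddCommGroup F] [NormedSpace ℝ F]

lemma ofReal_integral_norm_rpow_fderiv {μ : Measure E} [IsFiniteMeasureOnCompacts μ] {u : E → F}
    {p : ℝ} (hp : 0 < p) (hu : ContDiff ℝ 1 u) (hsupp : HasCompactSupport u) :
    ENNReal.ofReal (∫ x, ‖fderiv ℝ u x‖ ^ p ∂μ) = ∫⁻ x, ‖fderiv ℝ u x‖ₑ ^ p ∂μ := by
  have hint : Integrable (fun x => ‖fderiv ℝ u x‖ ^ p) μ := by
    refine Continuous.integrable_of_hasCompactSupport ?_ ?_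
    · exact (hu.continuous_fderiv one_ne_zero).norm.rpow_const fun _ => Or.inr hp.le
    · exact (hsupp.fderiv (𝕜 := ℝ)).comp_left (g := fun L => ‖L‖ ^ p) (by simp [hp.ne'])
  rw [ofReal_integral_eq_lintegral_ofReal hint (.of_forall fun x => by positivity)]
  simp_rw [← ENNReal.ofReal_rpow_of_nonneg (norm_nonneg _) hp.le, ofReal_norm]

theorem gagliardo_le_gradient_general [Nontrivial E] [FiniteDimensional ℝ E] (μ : Measure E)
    [μ.IsAddHaarMeasure] {s p : ℝ} (hs0 : 0 < s) (hs1 : s < 1) (hp : 1 ≤ p) {S : Set E}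
    (hS : IsBounded S) :
    ∃ c : ℝ, 0 < c ∧ ∀ u : E → F, ContDiff ℝ 1 u → Function.support u ⊆ S →
      ∫⁻ z, ENNReal.ofReal (‖u z.1 - u z.2‖ ^ p / ‖z.1 - z.2‖ ^ (finrank ℝ E + p * s)) ∂(μ.prod μ)
        ≤ ENNReal.ofReal (c * ∫ x, ‖fderiv ℝ u x‖ ^ p ∂μ) := by
  have hp₀ : 0 < p := zero_lt_one.trans_le hp
  obtain ⟨v, hv⟩ := exists_forall_add_notMem_of_isBounded hS
  have hK := lintegral_min_enorm_rpow_one_mul_ofReal_lt_top μ (mul_pos hp₀ hs0)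
    (mul_lt_of_lt_one_right hp₀ hs1)
  set C := (1 + 2 ^ p * ‖v‖ₑ ^ p) *
    ∫⁻ h, min (‖h‖ₑ ^ p) 1 * ENNReal.ofReal (‖h‖ ^ (finrank ℝ E + p * s))⁻¹ ∂μ
  have hC_top : C ≠ ∞ := by finiteness
  refine ⟨C.toReal + 1, by positivity, fun u hu hsupp => ?_⟩
  have hcompact : HasCompactSupport u :=
    .of_support_subset_isCompact hS.isCompact_closure (hsupp.trans subset_closure)
  have hv_zero (x : E) (hx : u x ≠ 0) : u (x + v) = 0 :=
    Function.notMem_support.1 fun h => hv x (hsupp hx) (hsupp h)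
  rw [ENNReal.ofReal_mul (by positivity), ofReal_integral_norm_rpow_fderiv hp₀ hu hcompact]
  calc ∫⁻ z, ENNReal.ofReal
          (‖u z.1 - u z.2‖ ^ p / ‖z.1 - z.2‖ ^ (finrank ℝ E + p * s)) ∂(μ.prod μ)
      = ∫⁻ z, ‖u z.1 - u z.2‖ₑ ^ p *
          ENNReal.ofReal (‖z.1 - z.2‖ ^ (finrank ℝ E + p * s))⁻¹ ∂(μ.prod μ) := by
        refine lintegral_congr fun z => ?_
        rw [div_eq_mul_inv, ENNReal.ofReal_mul (by positivity),
          ← ENNReal.ofReal_rpow_of_nonneg (norm_nonneg _) hp₀.le, ofReal_norm]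
    _ ≤ C * ∫⁻ x, ‖fderiv ℝ u x‖ₑ ^ p ∂μ :=
        lintegral_prod_enorm_sub_rpow_mul_le hp hu hv_zero
          (k := fun h => ENNReal.ofReal (‖h‖ ^ (finrank ℝ E + p * s))⁻¹) (by fun_prop)
    _ ≤ ENNReal.ofReal (C.toReal + 1) * ∫⁻ x, ‖fderiv ℝ u x‖ₑ ^ p ∂μ := by
        gcongr
        exact (ENNReal.le_ofReal_iff_toReal_le hC_top (by positivity)).2 (by linarith)

end FiniteDimensional

/-- For `N ≥ 1`, `0 < s < 1 < p`, `R > 0`, there exists `c > 0` such that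
the Gagliardo energy of any `C¹` function supported in the closed ball of radius `R`
is bounded by `c` times the `p`-energy of its gradient. -/
theorem gagliardo_le_gradient (N : ℕ) (hN : 1 ≤ N) (s p : ℝ) (hs0 : 0 < s) (hs1 : s < 1)
    (hp : 1 < p) (R : ℝ) (hR : 0 < R) :
    ∃ c : ℝ, 0 < c ∧
      ∀ u : EuclideanSpace ℝ (Fin N) → ℝ, ContDiff ℝ 1 u →
        Function.support u ⊆ closedBall (0 : EuclideanSpace ℝ (Fin N)) R →
        (∫⁻ z : EuclideanSpace ℝ (Fin N) × EuclideanSpace ℝ (Fin N),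
            ENNReal.ofReal (|u z.1 - u z.2| ^ p / ‖z.1 - z.2‖ ^ ((N : ℝ) + p * s)))
          ≤ ENNReal.ofReal (c * ∫ x : EuclideanSpace ℝ (Fin N), ‖fderiv ℝ u x‖ ^ p) := by
  have : NeZero N := ⟨Nat.one_le_iff_ne_zero.1 hN⟩
  simpa [Measure.volume_eq_prod] using
    gagliardo_le_gradient_general (E := EuclideanSpace ℝ (Fin N)) (F := ℝ) volume hs0 hs1 hp.le
      (isBounded_closedBall (x := 0) (r := R))
end

section
/- Let p > 1 and κ > 0. For every a, b, c, d ∈ ℝ one has (Φ(a−b) − Φ(c−d)) · (T_κ(a−c) − T_κ(b−d)) ≥ 0, where Φ(t) = |t|^{p−2} t. -/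
/-!
Both `Φ` and `T_κ` are monotone. Since `(a - b) - (c - d) = (a - c) - (b - d)`, the arguments
of the two increments are ordered the same way, so the increments have the same sign.
-/

theorem monotone_of_odd_of_monotoneOn_pos {G R : Type*}
    [AddCommGroup G] [LinearOrder G] [IsOrderedAddMonoid G]
    [AddCommGroup R] [PartialOrder R] [IsOrderedAddMonoid R] [IsAddTorsionFree R] {f : G → R}
    (odd : f.Odd) (nonneg : ∀ t, 0 < t → 0 ≤ f t)
    (mono : MonotoneOn f (Set.Ioi 0)) : Monotone f := by
  refine monotone_of_odd_of_monotoneOn_nonneg odd fun s hs t ht hst ↦ ?_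
  rcases (show 0 ≤ s from hs).eq_or_lt with rfl | s_pos
  · rcases hst.eq_or_lt with rfl | t_pos
    · rfl
    · simpa only [odd.map_zero] using nonneg t t_pos
  · exact mono s_pos (s_pos.trans_le hst) hst

theorem mul_sub_sub_nonneg_of_monotone {G R : Type*}
    [AddCommGroup G] [LinearOrder G] [IsOrderedAddMonoid G]
    [Ring R] [PartialOrder R] [IsOrderedRing R]
    {f g : G → R} (hf : Monotone f) (hg : Monotone g) (a b c d : G) :
    0 ≤ (f (a - b) - f (c - d)) * (g (a - c) - g (b - d)) := by
  rcases le_total (a - b) (c - d) with hab | hcd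
  · have hac : a - c ≤ b - d := by
      rwa [← sub_nonpos, sub_sub_sub_comm, sub_nonpos]
    exact mul_nonneg_of_nonpos_of_nonpos (sub_nonpos.2 (hf hab)) (sub_nonpos.2 (hg hac))
  · have hbd : b - d ≤ a - c := by
      rwa [← sub_nonneg, sub_sub_sub_comm, sub_nonneg]
    exact mul_nonneg (sub_nonneg.2 (hf hcd)) (sub_nonneg.2 (hg hbd))

section DualityMap

/-- The `p`-duality map `Φ(t) = |t|^(p-2) t` on the real line. At `t = 0` the second factor
makes it vanish for every `p`, whatever the value of `0 ^ (p - 2)`. -/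
noncomputable def dualityMap (p t : ℝ) : ℝ :=
  |t| ^ (p - 2) * t

variable {p : ℝ}

theorem odd_dualityMap : (dualityMap p).Odd := fun t ↦ by
  simp only [dualityMap, abs_neg, mul_neg]

theorem dualityMap_of_pos {t : ℝ} (ht : 0 < t) : dualityMap p t = t ^ (p - 1) := by
  rw [dualityMap, abs_of_pos ht, ← Real.rpow_add_one ht.ne']
  ring_nf

theorem monotone_dualityMap (hp : 1 ≤ p) : Monotone (dualityMap p) := by
  refine monotone_of_odd_of_monotoneOn_pos odd_dualityMap (fun t ht ↦ ?_) fun s hs t ht hst ↦ ?_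
  · rw [dualityMap_of_pos ht]
    exact Real.rpow_nonneg ht.le _
  · rw [dualityMap_of_pos hs, dualityMap_of_pos ht]
    exact Real.rpow_le_rpow (le_of_lt hs) hst (sub_nonneg.2 hp)

end DualityMap

section Truncation

variable {K : Type*} [Field K] [LinearOrder K]

/-- The truncation `T_κ` at level `κ`: the identity on `[-κ, κ]`, and `κ` times the sign of `t`
outside it. -/
def truncation (κ t : K) : K :=
  if |t| ≤ κ then t else κ * t / |t|

variable {κ : K}

theorem odd_truncation : (truncation κ).Odd := fun t ↦ by
  simp only [truncation, abs_neg, mul_neg, neg_div, neg_ite]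

variable [IsStrictOrderedRing K]

theorem truncation_of_pos {t : K} (ht : 0 < t) : truncation κ t = min t κ := by
  rw [truncation, abs_of_pos ht, mul_div_cancel_right₀ κ ht.ne', min_def]

theorem monotone_truncation (hκ : 0 ≤ κ) : Monotone (truncation κ) := by
  refine monotone_of_odd_of_monotoneOn_pos odd_truncation (fun t ht ↦ ?_) fun s hs t ht hst ↦ ?_
  · rw [truncation_of_pos ht]
    exact le_min ht.le hκ
  · rw [truncation_of_pos hs, truncation_of_pos ht]
    exact min_le_min_right κ hst

end Truncation

/-- For `p > 1`, `κ > 0` and all reals `a, b, c, d`,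
`(Φ(a−b) − Φ(c−d)) · (T_κ(a−c) − T_κ(b−d)) ≥ 0`, where `Φ(t) = |t|^(p−2) t` and
`T_κ` is the truncation at level `κ`. -/
theorem simon_truncation_ineq (p κ : ℝ) (hp : 1 < p) (hκ : 0 < κ) (a b c d : ℝ) :
    0 ≤ (|a - b| ^ (p - 2) * (a - b) - |c - d| ^ (p - 2) * (c - d)) *
        ((if |a - c| ≤ κ then a - c else κ * (a - c) / |a - c|) -
         (if |b - d| ≤ κ then b - d else κ * (b - d) / |b - d|)) :=
  mul_sub_sub_nonneg_of_monotone (monotone_dualityMap hp.le) (monotone_truncation hκ.le) a b c d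
end

section
/- Let N be an integer and let 1 < p < N, set p* = Np/(N−p), let r > 0, and let q be a real number with q > p*(1 − 1/p). Then there exists a constant C > 0 such that for every ε ∈ (0, 1], ∫_{B_r(0)} U_ε(x)^q dx ≥ C ε^{N − q(N−p)/p}, where B_r(0) is the ball of radius r centered at the origin. -/
/-!
The bubbles form a single orbit of the rescaling `U_ε(x) = ε^{-(N-p)/p} U_1(x/ε)`. Substituting
`y = x/ε` gives `∫_{B_r} U_ε^q = ε^{N - q(N-p)/p} ∫_{B_{r/ε}} U_1^q`, and for `ε ≤ 1` the ball
`B_{r/ε}` contains `B_r`, so that `C = ∫_{B_r} U_1^q` will do.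
-/

open MeasureTheory Metric

/-- The Aubin–Talenti bubble `U_ε`. -/
noncomputable def bubble (N : ℕ) (p ε : ℝ) (x : EuclideanSpace ℝ (Fin N)) : ℝ :=
  ((N : ℝ) * (((N : ℝ) - p) / (p - 1)) ^ (p - 1)) ^ (((N : ℝ) - p) / p ^ 2) *
    ε ^ (((N : ℝ) - p) / (p * (p - 1))) *
    (ε ^ (p / (p - 1)) + ‖x‖ ^ (p / (p - 1))) ^ (-(((N : ℝ) - p) / p))

theorem setIntegral_pos_of_forall_pos {α : Type*} [MeasurableSpace α] {μ : Measure α} {s : Set α}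
    {f : α → ℝ} (hf : ∀ x, 0 < f x) (hfi : IntegrableOn f s μ) (hs : μ s ≠ 0) :
    0 < ∫ x in s, f x ∂μ := by
  have hsupport : Function.support f = Set.univ := Set.eq_univ_of_forall fun x => (hf x).ne'
  rw [setIntegral_pos_iff_support_of_nonneg_ae (ae_of_all _ fun x => (hf x).le) hfi, hsupport,
    Set.univ_inter]
  exact pos_iff_ne_zero.2 hs

theorem integrableOn_ball_of_locallyIntegrable {X F : Type*} [PseudoMetricSpace X] [ProperSpace X]
    [MeasurableSpace X] [NormedAddCommGroup F] {μ : Measure X} {f : X → F}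
    (hf : LocallyIntegrable f μ) (x : X) (r : ℝ) : IntegrableOn f (ball x r) μ :=
  (hf.integrableOn_isCompact (isCompact_closedBall x r)).mono_set ball_subset_closedBall

section Dilation

variable {E : Type*} [NormedAddCommGroup E] [NormedSpace ℝ E] [FiniteDimensional ℝ E]
  [MeasurableSpace E] [BorelSpace E] (μ : Measure E) [μ.IsAddHaarMeasure] {ε : ℝ}

theorem setIntegral_ball_comp_inv_smul {F : Type*} [NormedAddCommGroup F] [NormedSpace ℝ F]
    (f : E → F) (r : ℝ) (hε : 0 < ε) :
    ∫ x in ball 0 r, f (ε⁻¹ • x) ∂μ =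
      ε ^ Module.finrank ℝ E • ∫ x in ball 0 (r / ε), f x ∂μ := by
  rw [Measure.setIntegral_comp_smul_of_pos μ f _ (inv_pos.2 hε),
    _root_.smul_ball (inv_ne_zero hε.ne'), smul_zero, Real.norm_of_nonneg (inv_nonneg.2 hε.le),
    inv_pow, inv_inv, inv_mul_eq_div]

theorem pow_finrank_mul_setIntegral_ball_le_comp_inv_smul {f : E → ℝ}
    (hf : LocallyIntegrable f μ) (hf₀ : 0 ≤ f) {r : ℝ} (hr : 0 ≤ r) (hε : 0 < ε) (hε₁ : ε ≤ 1) :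
    ε ^ Module.finrank ℝ E * ∫ x in ball 0 r, f x ∂μ ≤ ∫ x in ball 0 r, f (ε⁻¹ • x) ∂μ := by
  rw [setIntegral_ball_comp_inv_smul μ f r hε, smul_eq_mul]
  have hball : ball (0 : E) r ⊆ ball 0 (r / ε) := ball_subset_ball (le_div_self hr hε hε₁)
  have hmono : ∫ x in ball 0 r, f x ∂μ ≤ ∫ x in ball 0 (r / ε), f x ∂μ :=
    setIntegral_mono_set (integrableOn_ball_of_locallyIntegrable hf 0 (r / ε)) (ae_of_all _ hf₀)
      hball.eventuallyLE
  gcongr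

end Dilation

section Bubble

variable {N : ℕ} {p ε : ℝ}

theorem bubble_pos (hp : 1 < p) (hpN : p < N) (hε : 0 < ε) (x : EuclideanSpace ℝ (Fin N)) :
    0 < bubble N p ε x := by
  have hconst : 0 < (N : ℝ) * ((N - p) / (p - 1)) ^ (p - 1) :=
    mul_pos (by linarith) (Real.rpow_pos_of_pos (div_pos (sub_pos.2 hpN) (sub_pos.2 hp)) _)
  have hprofile : 0 < ε ^ (p / (p - 1)) + ‖x‖ ^ (p / (p - 1)) := by positivity
  exact mul_pos (mul_pos (Real.rpow_pos_of_pos hconst _) (Real.rpow_pos_of_pos hε _))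
    (Real.rpow_pos_of_pos hprofile _)

theorem continuous_bubble (hp : 1 < p) (hε : 0 < ε) : Continuous (bubble N p ε) := by
  have hexponent : 0 ≤ p / (p - 1) := div_nonneg (by linarith) (by linarith)
  have hnorm : Continuous fun x : EuclideanSpace ℝ (Fin N) => ‖x‖ ^ (p / (p - 1)) :=
    continuous_norm.rpow_const fun _ => Or.inr hexponent
  have hprofile (x : EuclideanSpace ℝ (Fin N)) : ε ^ (p / (p - 1)) + ‖x‖ ^ (p / (p - 1)) ≠ 0 := by
    positivity
  exact continuous_const.mul <|
    (continuous_const.add hnorm).rpow_const fun x => Or.inl (hprofile x)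

theorem continuous_bubble_rpow (hp : 1 < p) (hpN : p < N) (hε : 0 < ε) (q : ℝ) :
    Continuous fun x => bubble N p ε x ^ q :=
  (continuous_bubble hp hε).rpow_const fun x => Or.inl (bubble_pos hp hpN hε x).ne'

theorem bubble_eq_rpow_mul_bubble_one (hp₀ : p ≠ 0) (hp₁ : p ≠ 1) (hε : 0 < ε)
    (x : EuclideanSpace ℝ (Fin N)) :
    bubble N p ε x = ε ^ (-((N - p) / p)) * bubble N p 1 (ε⁻¹ • x) := by
  have hp₁' : p - 1 ≠ 0 := sub_ne_zero.2 hp₁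
  have hprofile : ε ^ (p / (p - 1)) + ‖x‖ ^ (p / (p - 1)) =
      ε ^ (p / (p - 1)) * (1 ^ (p / (p - 1)) + ‖ε⁻¹ • x‖ ^ (p / (p - 1))) := by
    rw [mul_add, ← Real.mul_rpow hε.le zero_le_one, ← Real.mul_rpow hε.le (norm_nonneg _), mul_one,
      norm_smul_of_nonneg (inv_nonneg.2 hε.le), mul_inv_cancel_left₀ hε.ne']
  have hexponent : -((N - p) / p) = (N - p) / (p * (p - 1)) + p / (p - 1) * -((N - p) / p) := by
    field_simp
    ring
  unfold bubble
  rw [hprofile, Real.mul_rpow (x := ε ^ _) (by positivity) (by positivity), ← Real.rpow_mul hε.le,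
    Real.one_rpow ((N - p) / (p * (p - 1))), congrArg (ε ^ ·) hexponent, Real.rpow_add hε]
  ring

theorem setIntegral_bubble_rpow_eq_rpow_mul (hp : 1 < p) (hpN : p < N) (hε : 0 < ε)
    (s : Set (EuclideanSpace ℝ (Fin N))) (q : ℝ) :
    ∫ x in s, bubble N p ε x ^ q =
      ε ^ (-((N - p) / p) * q) * ∫ x in s, bubble N p 1 (ε⁻¹ • x) ^ q := by
  have hp₀ : p ≠ 0 := by positivity
  simp_rw [bubble_eq_rpow_mul_bubble_one hp₀ hp.ne' hε,
    Real.mul_rpow (Real.rpow_nonneg hε.le _) (bubble_pos hp hpN one_pos _).le,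
    ← Real.rpow_mul hε.le, integral_const_mul]

end Bubble

theorem bubble_Lq_lower_bound_general (N : ℕ) (p : ℝ) (hp : 1 < p) (hpN : p < N)
    (r q : ℝ) (hr : 0 < r) :
    ∃ C : ℝ, 0 < C ∧ ∀ ε ∈ Set.Ioc (0 : ℝ) 1,
      C * ε ^ ((N : ℝ) - q * ((N : ℝ) - p) / p) ≤
        ∫ x in ball (0 : EuclideanSpace ℝ (Fin N)) r, (bubble N p ε x) ^ q := by
  have hpos (x) : 0 < bubble N p 1 x ^ q := Real.rpow_pos_of_pos (bubble_pos hp hpN one_pos x) q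
  have hint : LocallyIntegrable (fun x => bubble N p 1 x ^ q) :=
    (continuous_bubble_rpow hp hpN one_pos q).locallyIntegrable
  refine ⟨∫ x in ball 0 r, bubble N p 1 x ^ q, setIntegral_pos_of_forall_pos hpos
    (integrableOn_ball_of_locallyIntegrable hint 0 r) (measure_ball_pos _ 0 hr).ne', ?_⟩
  rintro ε ⟨hε, hε₁⟩
  have hexponent : (N : ℝ) - q * (N - p) / p = -((N - p) / p) * q + N := by ring
  calc (∫ x in ball 0 r, bubble N p 1 x ^ q) * ε ^ ((N : ℝ) - q * (N - p) / p)
      = ε ^ (-((N - p) / p) * q) * (ε ^ N * ∫ x in ball 0 r, bubble N p 1 x ^ q) := by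
        rw [hexponent, Real.rpow_add hε, Real.rpow_natCast]
        ring
    _ ≤ ε ^ (-((N - p) / p) * q) * ∫ x in ball 0 r, bubble N p 1 (ε⁻¹ • x) ^ q := by
        gcongr
        simpa only [finrank_euclideanSpace_fin] using
          pow_finrank_mul_setIntegral_ball_le_comp_inv_smul volume hint (fun x => (hpos x).le)
            hr.le hε hε₁
    _ = ∫ x in ball 0 r, bubble N p ε x ^ q :=
        (setIntegral_bubble_rpow_eq_rpow_mul hp hpN hε (ball 0 r) q).symm

/-- lower bound `∫_{B_r(0)} U_ε^q ≥ C ε^{N − q(N−p)/p}` for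
`q > p*(1 − 1/p)`, uniformly for `ε ∈ (0,1]`. -/
theorem bubble_Lq_lower_bound (N : ℕ) (p : ℝ) (hp : 1 < p) (hpN : p < N)
    (r q : ℝ) (hr : 0 < r)
    (hq : ((N : ℝ) * p / ((N : ℝ) - p)) * (1 - 1 / p) < q) :
    ∃ C : ℝ, 0 < C ∧ ∀ ε ∈ Set.Ioc (0 : ℝ) 1,
      C * ε ^ ((N : ℝ) - q * ((N : ℝ) - p) / p) ≤
        ∫ x in ball (0 : EuclideanSpace ℝ (Fin N)) r, (bubble N p ε x) ^ q :=
  bubble_Lq_lower_bound_general N p hp hpN r q hr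
end

section
/- Let N be an integer, 1 < p < N, and ρ > 0. Then there exists a constant C > 0 (depending only on N, p and ρ) such that for every ε > 0 the function U_ε is differentiable at every x ∈ ℝ^N with ‖x‖ ≥ ρ, and ‖∇U_ε(x)‖ ≤ C ε^{(N−p)/(p(p−1))} for all such x. -/
/-!
`U_ε` is a multiple of `x ↦ (c + ‖x‖ ^ q) ^ s` with `c = ε ^ q`, `q = p / (p - 1)` and
`s = -(N - p) / p`. The norm has gradient of length one away from the origin, so the gradient of
such a function has length `|q s| r ^ (q - 1) (c + r ^ q) ^ (s - 1)` at `r = ‖x‖`. As `s ≤ 1`, the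
last factor only grows when `c` is replaced by `0`, which leaves the `ε`-independent quantity
`|q s| r ^ (q s - 1)`. Here `q s - 1 = (1 - N) / (p - 1) ≤ 0`, the decay rate of the gradient of the
`p`-harmonic fundamental solution, so the bound is worst at `r = ρ`.
-/

section RadialFunction

variable {E : Type*} [NormedAddCommGroup E] [NormedSpace ℝ E] {x : E}

theorem ne_zero_of_differentiableAt_norm [Nontrivial E] (hx : DifferentiableAt ℝ (‖·‖) x) :
    x ≠ 0 := by
  rintro rfl
  exact not_differentiableAt_norm_zero E hx

theorem norm_fderiv_comp_norm [Nontrivial E] {f : ℝ → ℝ} {f' : ℝ}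
    (hx : DifferentiableAt ℝ (‖·‖) x) (hf : HasDerivAt f f' ‖x‖) :
    ‖fderiv ℝ (fun y ↦ f ‖y‖) x‖ = |f'| := by
  have hcomp : HasFDerivAt (fun y ↦ f ‖y‖) (f' • fderiv ℝ (‖·‖) x) x :=
    hf.comp_hasFDerivAt x hx.hasFDerivAt
  rw [hcomp.fderiv, norm_smul, norm_fderiv_norm hx, mul_one, Real.norm_eq_abs]

theorem hasDerivAt_const_add_rpow_rpow {c r : ℝ} (hc : 0 ≤ c) (hr : 0 < r) (q s : ℝ) :
    HasDerivAt (fun t ↦ (c + t ^ q) ^ s) (q * s * (r ^ (q - 1) * (c + r ^ q) ^ (s - 1))) r := by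
  have hbase : 0 < c + r ^ q := by positivity
  have hinner : HasDerivAt (fun t ↦ c + t ^ q) (q * r ^ (q - 1)) r :=
    (Real.hasDerivAt_rpow_const (Or.inl hr.ne')).const_add c
  exact (hinner.rpow_const (Or.inl hbase.ne')).congr_deriv (by ring)

theorem rpow_mul_const_add_rpow_rpow_le {c r s : ℝ} (hc : 0 ≤ c) (hr : 0 < r) (hs : s ≤ 1)
    (q : ℝ) : r ^ (q - 1) * (c + r ^ q) ^ (s - 1) ≤ r ^ (q * s - 1) := by
  have hrq : 0 < r ^ q := by positivity
  calc r ^ (q - 1) * (c + r ^ q) ^ (s - 1)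
      ≤ r ^ (q - 1) * (r ^ q) ^ (s - 1) := by
        gcongr ?_ * ?_
        exact Real.rpow_le_rpow_of_nonpos hrq (by linarith) (by linarith)
    _ = r ^ (q * s - 1) := by
        rw [← Real.rpow_mul hr.le, ← Real.rpow_add hr]
        ring_nf

theorem differentiableAt_const_add_norm_rpow_rpow {c : ℝ} (hc : 0 ≤ c)
    (hx : DifferentiableAt ℝ (‖·‖) x) (q s : ℝ) :
    DifferentiableAt ℝ (fun y ↦ (c + ‖y‖ ^ q) ^ s) x := by
  obtain _ | _ := subsingleton_or_nontrivial E
  · exact (hasFDerivAt_of_subsingleton _ x).differentiableAt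
  · have hr : 0 < ‖x‖ := norm_pos_iff.2 (ne_zero_of_differentiableAt_norm hx)
    exact ((hasDerivAt_const_add_rpow_rpow hc hr q s).comp_hasFDerivAt x
      hx.hasFDerivAt).differentiableAt

theorem norm_fderiv_const_add_norm_rpow_rpow_le {c s : ℝ} (hc : 0 ≤ c) (hs : s ≤ 1)
    (hx : DifferentiableAt ℝ (‖·‖) x) (q : ℝ) :
    ‖fderiv ℝ (fun y ↦ (c + ‖y‖ ^ q) ^ s) x‖ ≤ |q * s| * ‖x‖ ^ (q * s - 1) := by
  obtain _ | _ := subsingleton_or_nontrivial E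
  · rw [(hasFDerivAt_of_subsingleton _ x).fderiv, norm_zero]
    positivity
  · have hr : 0 < ‖x‖ := norm_pos_iff.2 (ne_zero_of_differentiableAt_norm hx)
    rw [norm_fderiv_comp_norm hx (hasDerivAt_const_add_rpow_rpow hc hr q s), abs_mul,
      abs_of_nonneg (a := _ * _ ^ (s - 1)) (by positivity)]
    gcongr
    exact rpow_mul_const_add_rpow_rpow_le hc hr hs q

end RadialFunction

section Bubble

variable {N : ℕ} {p ε : ℝ} {x : EuclideanSpace ℝ (Fin N)}

/-- The normalising constant `K_{N,p}` of the Aubin–Talenti bubbles. -/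
noncomputable def bubbleConst (N : ℕ) (p : ℝ) : ℝ :=
  ((N : ℝ) * (((N : ℝ) - p) / (p - 1)) ^ (p - 1)) ^ (((N : ℝ) - p) / p ^ 2)

theorem bubbleConst_pos (hp : 1 < p) (hpN : p < N) : 0 < bubbleConst N p := by
  have hN : (0 : ℝ) < N := by linarith
  have hbase : 0 < ((N : ℝ) - p) / (p - 1) := div_pos (by linarith) (by linarith)
  exact Real.rpow_pos_of_pos (mul_pos hN (Real.rpow_pos_of_pos hbase _)) _

theorem differentiableAt_bubble (p : ℝ) (hε : 0 ≤ ε) (hx : x ≠ 0) :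
    DifferentiableAt ℝ (bubble N p ε) x :=
  (differentiableAt_const_add_norm_rpow_rpow (Real.rpow_nonneg hε _)
    (differentiableAt_id.norm ℝ hx) _ _).const_mul _

theorem norm_fderiv_bubble_le (hp : 1 < p) (hpN : p < N) (hε : 0 ≤ ε) (hx : x ≠ 0) :
    ‖fderiv ℝ (bubble N p ε) x‖ ≤
      bubbleConst N p * ε ^ (((N : ℝ) - p) / (p * (p - 1))) *
        (((N : ℝ) - p) / (p - 1) * ‖x‖ ^ ((1 - (N : ℝ)) / (p - 1))) := by
  have hp₀ : 0 < p := by linarith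
  have hp₁ : 0 < p - 1 := by linarith
  have hK := bubbleConst_pos hp hpN
  set q : ℝ := p / (p - 1) with hq
  set s : ℝ := -(((N : ℝ) - p) / p) with hs
  have hqs : q * s = -(((N : ℝ) - p) / (p - 1)) := by
    rw [hq, hs]
    field_simp
  have hexp : q * s - 1 = (1 - (N : ℝ)) / (p - 1) := by
    rw [hqs]
    field_simp
    ring
  have habs : |q * s| = ((N : ℝ) - p) / (p - 1) := by
    rw [hqs, abs_neg, abs_of_pos (div_pos (by linarith) hp₁)]
  have hs₁ : s ≤ 1 := by
    have : 0 < ((N : ℝ) - p) / p := div_pos (by linarith) hp₀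
    linarith
  have hc : 0 ≤ ε ^ q := Real.rpow_nonneg hε q
  have hnorm : DifferentiableAt ℝ (‖·‖) x := differentiableAt_id.norm ℝ hx
  have hscale : fderiv ℝ (bubble N p ε) x =
      (bubbleConst N p * ε ^ (((N : ℝ) - p) / (p * (p - 1)))) •
        fderiv ℝ (fun y ↦ (ε ^ q + ‖y‖ ^ q) ^ s) x :=
    fderiv_const_mul (differentiableAt_const_add_norm_rpow_rpow hc hnorm q s) _
  rw [hscale, norm_smul, Real.norm_of_nonneg (by positivity), ← habs, ← hexp]
  gcongr
  exact norm_fderiv_const_add_norm_rpow_rpow_le hc hs₁ hnorm q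

end Bubble

/-- there exists `C > 0` depending only on `N, p, ρ` such that for every
`ε > 0`, `U_ε` is differentiable at each `x` with `‖x‖ ≥ ρ` and
`‖∇U_ε(x)‖ ≤ C ε^{(N−p)/(p(p−1))}` there. -/
theorem bubble_gradient_bound (N : ℕ) (p : ℝ) (hp : 1 < p) (hpN : p < N)
    (ρ : ℝ) (hρ : 0 < ρ) :
    ∃ C : ℝ, 0 < C ∧ ∀ ε : ℝ, 0 < ε → ∀ x : EuclideanSpace ℝ (Fin N), ρ ≤ ‖x‖ →
      DifferentiableAt ℝ (bubble N p ε) x ∧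
        ‖fderiv ℝ (bubble N p ε) x‖ ≤ C * ε ^ (((N : ℝ) - p) / (p * (p - 1))) := by
  have hp₁ : 0 < p - 1 := by linarith
  have hNp : 0 < (N : ℝ) - p := by linarith
  have hK := bubbleConst_pos hp hpN
  have hdecay : (1 - (N : ℝ)) / (p - 1) ≤ 0 := div_nonpos_of_nonpos_of_nonneg (by linarith) hp₁.le
  refine ⟨bubbleConst N p * (((N : ℝ) - p) / (p - 1) * ρ ^ ((1 - (N : ℝ)) / (p - 1))),
    mul_pos hK (mul_pos (div_pos hNp hp₁) (Real.rpow_pos_of_pos hρ _)), fun ε hε x hx ↦ ?_⟩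
  have hx₀ : x ≠ 0 := norm_pos_iff.1 (hρ.trans_le hx)
  refine ⟨differentiableAt_bubble p hε.le hx₀, ?_⟩
  rw [mul_right_comm]
  refine (norm_fderiv_bubble_le hp hpN hε.le hx₀).trans ?_
  gcongr _ * (_ * ?_)
  exact Real.rpow_le_rpow_of_nonpos hρ hx hdecay
end

section
/- Let N be an integer with 1 < p < N and set p* = Np/(N−p). Then the function U_1 is continuously differentiable on ℝ^N, ∫_{ℝ^N} U_1(x)^{p*} dx < ∞, and ∫_{ℝ^N} ‖∇U_1(x)‖^p dx < ∞; that is, the Aubin–Talenti bubble belongs to D^{1,p}(ℝ^N) ∩ L^{p*}(ℝ^N). -/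
open MeasureTheory

/-- The Aubin–Talenti bubble `U_1`. -/
noncomputable def bubbleOne (N : ℕ) (p : ℝ) (x : EuclideanSpace ℝ (Fin N)) : ℝ :=
  ((N : ℝ) * (((N : ℝ) - p) / (p - 1)) ^ (p - 1)) ^ (((N : ℝ) - p) / p ^ 2) *
    (1 + ‖x‖ ^ (p / (p - 1))) ^ (-(((N : ℝ) - p) / p))

/-!
Put `q = p / (p - 1)` and `s = (N - p) / p`. At infinity `U_1` decays like `‖x‖ ^ (-q s)` and its
gradient like `‖x‖ ^ (-(q s + 1))`, where `q s = (N - p) / (p - 1)` and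
`q s + 1 = (N - 1) / (p - 1)`. A power `‖x‖ ^ (-a)` has integrable `r`-th power at infinity as soon
as `N < a r`, and both `q s p* = q N` and `(q s + 1) p = p (N - 1) / (p - 1)` exceed `N`.
-/

open Module

section Comparison

variable {q t : ℝ}

theorem one_add_le_two_mul_one_add_rpow_rpow_inv (hq : 0 < q) (ht : 0 ≤ t) :
    1 + t ≤ 2 * (1 + t ^ q) ^ q⁻¹ := by
  have htq : 0 ≤ t ^ q := Real.rpow_nonneg ht q
  have one_le : 1 ≤ (1 + t ^ q) ^ q⁻¹ := Real.one_le_rpow (by linarith) (by positivity)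
  have t_le : t ≤ (1 + t ^ q) ^ q⁻¹ := calc
    t = (t ^ q) ^ q⁻¹ := (Real.rpow_rpow_inv ht hq.ne').symm
    _ ≤ (1 + t ^ q) ^ q⁻¹ := by gcongr; linarith
  linarith

theorem one_add_rpow_rpow_neg_le {s : ℝ} (hq : 0 < q) (hs : 0 ≤ s) (ht : 0 ≤ t) :
    (1 + t ^ q) ^ (-s) ≤ 2 ^ (q * s) * (1 + t) ^ (-(q * s)) := by
  have hb : 0 < 1 + t ^ q := by positivity
  calc (1 + t ^ q) ^ (-s) = 2 ^ (q * s) * (2 * (1 + t ^ q) ^ q⁻¹) ^ (-(q * s)) := by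
        rw [Real.mul_rpow two_pos.le (by positivity), ← Real.rpow_mul hb.le, ← mul_assoc,
          ← Real.rpow_add two_pos, add_neg_cancel, Real.rpow_zero, one_mul, mul_neg,
          inv_mul_cancel_left₀ hq.ne']
    _ ≤ 2 ^ (q * s) * (1 + t) ^ (-(q * s)) := by
        gcongr 2 ^ (q * s) * ?_
        exact Real.rpow_le_rpow_of_nonpos (by positivity)
          (one_add_le_two_mul_one_add_rpow_rpow_inv hq ht) (neg_nonpos.2 (by positivity))

end Comparison

theorem lintegral_ofReal_rpow_lt_top_of_memLp {α : Type*} [MeasurableSpace α] {μ : Measure α}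
    {f : α → ℝ} {r : ℝ} (hr : 0 < r) (hf : MemLp f (ENNReal.ofReal r) μ) :
    ∫⁻ x, ENNReal.ofReal (f x ^ r) ∂μ < ⊤ := by
  have hint : Integrable (fun x ↦ |f x| ^ r) μ := by
    simpa [ENNReal.toReal_ofReal hr.le] using
      hf.integrable_norm_rpow (by simpa using hr) ENNReal.ofReal_ne_top
  refine (lintegral_mono fun x ↦ ENNReal.ofReal_le_ofReal ?_).trans_lt hint.lintegral_lt_top
  exact (le_abs_self _).trans (Real.abs_rpow_le_abs_rpow _ _)

/-- The function `x ↦ c (1 + ‖x‖ ^ q) ^ (-s)`. The Aubin–Talenti bubbles in dimension `N` are the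
case `q = p / (p - 1)`, `s = (N - p) / p`. -/
noncomputable def radialBubble {E : Type*} [Norm E] (c q s : ℝ) (x : E) : ℝ :=
  c * (1 + ‖x‖ ^ q) ^ (-s)

section Normed

variable {E : Type*} [NormedAddCommGroup E] [NormedSpace ℝ E] [FiniteDimensional ℝ E]
  [MeasurableSpace E] [BorelSpace E] (μ : Measure E) [μ.IsAddHaarMeasure] {q s r : ℝ}

theorem memLp_one_add_norm_rpow_neg {a : ℝ} (hr : 0 < r) (har : finrank ℝ E < a * r) :
    MemLp (fun x : E ↦ (1 + ‖x‖) ^ (-a)) (ENNReal.ofReal r) μ := by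
  rw [← integrable_norm_rpow_iff
    (Measurable.aestronglyMeasurable (by fun_prop)) (by simpa using hr) ENNReal.ofReal_ne_top]
  refine (integrable_one_add_norm har).congr (.of_forall fun x ↦ ?_)
  have hx : 0 ≤ 1 + ‖x‖ := by positivity
  simp only [ENNReal.toReal_ofReal hr.le, Real.norm_of_nonneg (Real.rpow_nonneg hx _),
    ← Real.rpow_mul hx, neg_mul]

theorem memLp_radialBubble (c : ℝ) (hq : 0 < q) (hr : 0 < r) (h : finrank ℝ E < q * s * r) :
    MemLp (radialBubble (E := E) c q s) (ENNReal.ofReal r) μ := by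
  have hs : 0 ≤ s := by
    have : 0 < q * s * r := (Nat.cast_nonneg _).trans_lt h
    exact (pos_of_mul_pos_right (pos_of_mul_pos_left this hr.le) hq.le).le
  have hmeas : Measurable (radialBubble (E := E) c q s) := by unfold radialBubble; fun_prop
  refine (memLp_one_add_norm_rpow_neg μ hr h).of_le_mul (c := |c| * 2 ^ (q * s))
    hmeas.aestronglyMeasurable (.of_forall fun x ↦ ?_)
  rw [radialBubble, norm_mul, Real.norm_eq_abs, mul_assoc, Real.norm_of_nonneg (by positivity),
    Real.norm_of_nonneg (by positivity)]
  gcongr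
  exact one_add_rpow_rpow_neg_le hq hs (norm_nonneg x)

end Normed

section InnerProduct

variable {E : Type*} [NormedAddCommGroup E] [InnerProductSpace ℝ E] {q : ℝ}

theorem contDiff_radialBubble (c s : ℝ) (hq : 1 < q) :
    ContDiff ℝ 1 (radialBubble (E := E) c q s) :=
  contDiff_const.mul <| (contDiff_const.add (contDiff_norm_rpow hq)).rpow_const_of_ne
    fun x ↦ by positivity

theorem norm_fderiv_radialBubble (c s : ℝ) (hq : 1 < q) (x : E) :
    ‖fderiv ℝ (radialBubble c q s) x‖ =
      |c| * |s| * q * ‖x‖ ^ (q - 1) * (1 + ‖x‖ ^ q) ^ (-(s + 1)) := by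
  have hb : 0 < 1 + ‖x‖ ^ q := by positivity
  have hderiv : HasFDerivAt (radialBubble c q s)
      (c • (-s * (1 + ‖x‖ ^ q) ^ (-s - 1)) • fderiv ℝ (fun y : E ↦ ‖y‖ ^ q) x) x :=
    (((differentiable_norm_rpow hq x).hasFDerivAt.const_add 1).rpow_const
      (.inl hb.ne')).const_mul c
  rw [hderiv.fderiv, norm_smul, norm_smul, norm_mul, norm_neg, norm_fderiv_norm_id_rpow x hq,
    Real.norm_of_nonneg (Real.rpow_nonneg hb.le _), Real.norm_eq_abs, Real.norm_eq_abs, neg_add']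
  ring

theorem norm_fderiv_radialBubble_le (c : ℝ) {s : ℝ} (hq : 1 < q) (hs : -1 ≤ s) (x : E) :
    ‖fderiv ℝ (radialBubble c q s) x‖ ≤
      |c| * |s| * q * 2 ^ (q * (s + 1)) * (1 + ‖x‖) ^ (-(q * s + 1)) := by
  have hx : 0 < 1 + ‖x‖ := by positivity
  calc ‖fderiv ℝ (radialBubble c q s) x‖
      = |c| * |s| * q * ‖x‖ ^ (q - 1) * (1 + ‖x‖ ^ q) ^ (-(s + 1)) :=
        norm_fderiv_radialBubble c s hq x
    _ ≤ |c| * |s| * q * (1 + ‖x‖) ^ (q - 1) *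
          (2 ^ (q * (s + 1)) * (1 + ‖x‖) ^ (-(q * (s + 1)))) := by
        gcongr
        · linarith
        · exact one_add_rpow_rpow_neg_le (by linarith) (by linarith) (norm_nonneg x)
    _ = |c| * |s| * q * 2 ^ (q * (s + 1)) * (1 + ‖x‖) ^ (-(q * s + 1)) := by
        rw [show -(q * s + 1) = (q - 1) + -(q * (s + 1)) by ring, Real.rpow_add hx]
        ring

variable [FiniteDimensional ℝ E] [MeasurableSpace E] [BorelSpace E] (μ : Measure E)
  [μ.IsAddHaarMeasure]

theorem memLp_fderiv_radialBubble (c : ℝ) {s r : ℝ} (hq : 1 < q) (hr : 0 < r)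
    (h : finrank ℝ E < (q * s + 1) * r) :
    MemLp (fderiv ℝ (radialBubble (E := E) c q s)) (ENNReal.ofReal r) μ := by
  have hs : -1 ≤ s := by
    have : 0 < q * s + 1 := pos_of_mul_pos_left ((Nat.cast_nonneg _).trans_lt h) hr.le
    nlinarith
  have hmeas : AEStronglyMeasurable (fderiv ℝ (radialBubble (E := E) c q s)) μ :=
    ((contDiff_radialBubble c s hq).continuous_fderiv one_ne_zero).aestronglyMeasurable
  refine (memLp_one_add_norm_rpow_neg μ hr h).of_le_mul
    (c := |c| * |s| * q * 2 ^ (q * (s + 1))) hmeas (.of_forall fun x ↦ ?_)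
  rw [Real.norm_of_nonneg (by positivity)]
  exact norm_fderiv_radialBubble_le c hq hs x

theorem bubble_in_D1p_Lpstar_general {p : ℝ} (hp : 1 < p) (hpE : p < finrank ℝ E) (c : ℝ) :
    let U := radialBubble (E := E) c (p / (p - 1)) ((finrank ℝ E - p) / p)
    ContDiff ℝ 1 U ∧
      MemLp U (ENNReal.ofReal (finrank ℝ E * p / (finrank ℝ E - p))) μ ∧
      MemLp (fderiv ℝ U) (ENNReal.ofReal p) μ := by
  set n : ℝ := (finrank ℝ E : ℝ)
  have hp0 : 0 < p := by linarith
  have hp1 : 0 < p - 1 := by linarith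
  have hnp : 0 < n - p := by linarith
  have hn : 0 < n := by linarith
  have hq : 1 < p / (p - 1) := (one_lt_div hp1).2 (by linarith)
  have value_exponent : n < p / (p - 1) * ((n - p) / p) * (n * p / (n - p)) := calc
    n < p / (p - 1) * n := lt_mul_of_one_lt_left hn hq
    _ = p / (p - 1) * ((n - p) / p) * (n * p / (n - p)) := by field_simp
  have gradient_exponent : n < (p / (p - 1) * ((n - p) / p) + 1) * p := calc
    n < (n - 1) * p / (p - 1) := by rw [lt_div_iff₀ hp1]; linarith
    _ = (p / (p - 1) * ((n - p) / p) + 1) * p := by field_simp; ring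
  exact ⟨contDiff_radialBubble c _ hq,
    memLp_radialBubble μ c (by linarith) (by positivity) value_exponent,
    memLp_fderiv_radialBubble μ c hq hp0 gradient_exponent⟩

end InnerProduct

/-- `U_1` is `C¹`, `∫ U_1^{p*} < ∞` and `∫ ‖∇U_1‖^p < ∞`, i.e. the
Aubin–Talenti bubble belongs to `D^{1,p}(ℝ^N) ∩ L^{p*}(ℝ^N)`. -/
theorem bubble_in_D1p_Lpstar (N : ℕ) (p : ℝ) (hp : 1 < p) (hpN : p < N) :
    ContDiff ℝ 1 (bubbleOne N p) ∧
      (∫⁻ x : EuclideanSpace ℝ (Fin N),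
          ENNReal.ofReal ((bubbleOne N p x) ^ ((N : ℝ) * p / ((N : ℝ) - p)))) < ⊤ ∧
      (∫⁻ x : EuclideanSpace ℝ (Fin N),
          ENNReal.ofReal (‖fderiv ℝ (bubbleOne N p) x‖ ^ p)) < ⊤ := by
  have h := bubble_in_D1p_Lpstar_general (E := EuclideanSpace ℝ (Fin N)) volume hp (by simpa)
    ((N * ((N - p) / (p - 1)) ^ (p - 1)) ^ ((N - p) / p ^ 2))
  rw [finrank_euclideanSpace_fin] at h
  obtain ⟨hU, hU_Lpstar, hDU_Lp⟩ := h
  have hpstar : 0 < N * p / (N - p) := div_pos (by nlinarith) (by linarith)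
  exact ⟨hU, lintegral_ofReal_rpow_lt_top_of_memLp hpstar hU_Lpstar,
    lintegral_ofReal_rpow_lt_top_of_memLp (by linarith) hDU_Lp.norm⟩
end
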